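/- arXiv:1910.08460 — 2 statements merged into one kernel-verified Lean document; each statement's English description precedes it below -/
import Mathlib

section
/- Suppose δ'_j < 1/4. Then |λ̂_j − λ_j − tr(P_j E P_j)| ≤ 8 ‖P_j E |R_j|^{1/2}‖_2^2 / (1 − 4δ'_j) ≤ g_j (4δ'_j)^2 / (1 − 4δ'_j). -/
open Matrix Finset

noncomputable def opNorm {d : ℕ} (A : Matrix (Fin d) (Fin d) ℝ) : ℝ :=
  ‖Matrix.toEuclideanCLM (𝕜 := ℝ) A‖

noncomputable def hsNorm {d : ℕ} (A : Matrix (Fin d) (Fin d) ℝ) : ℝ :=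
  Real.sqrt (Matrix.trace (Aᵀ * A))

noncomputable def proj {d : ℕ} (u : Fin d → ℝ) : Matrix (Fin d) (Fin d) ℝ :=
  Matrix.vecMulVec u u

/-- `|R_j|^{1/2}` : square root of the absolute value of the reduced resolvent. -/
noncomputable def sqrtAbsRes {d : ℕ} (lam : Fin d → ℝ) (u : Fin d → Fin d → ℝ)
    (j : Fin d) : Matrix (Fin d) (Fin d) ℝ :=
  ∑ k ∈ Finset.univ.filter (fun k => k ≠ j), (Real.sqrt |lam k - lam j|)⁻¹ • proj (u k)

/-- `|R_j|^{-1/2}`. -/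
noncomputable def invSqrtAbsRes {d : ℕ} (lam : Fin d → ℝ) (u : Fin d → Fin d → ℝ)
    (j : Fin d) : Matrix (Fin d) (Fin d) ℝ :=
  ∑ k ∈ Finset.univ.filter (fun k => k ≠ j), Real.sqrt |lam k - lam j| • proj (u k)

/-- the reduced resolvent `R_j`. -/
noncomputable def res {d : ℕ} (lam : Fin d → ℝ) (u : Fin d → Fin d → ℝ)
    (j : Fin d) : Matrix (Fin d) (Fin d) ℝ :=
  ∑ k ∈ Finset.univ.filter (fun k => k ≠ j), (lam k - lam j)⁻¹ • proj (u k)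

/-- `δ_j`. -/
noncomputable def delta {d : ℕ} (lam : Fin d → ℝ) (u : Fin d → Fin d → ℝ) (j : Fin d)
    (gj : ℝ) (E : Matrix (Fin d) (Fin d) ℝ) : ℝ :=
  opNorm ((sqrtAbsRes lam u j + (Real.sqrt gj)⁻¹ • proj (u j)) * E *
    (sqrtAbsRes lam u j + (Real.sqrt gj)⁻¹ • proj (u j)))

/-- `δ'_j`. -/
noncomputable def delta' {d : ℕ} (lam : Fin d → ℝ) (u : Fin d → Fin d → ℝ) (j : Fin d)
    (gj : ℝ) (E : Matrix (Fin d) (Fin d) ℝ) : ℝ :=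
  max (opNorm (sqrtAbsRes lam u j * E * sqrtAbsRes lam u j))
    (max ((Real.sqrt gj)⁻¹ * hsNorm (sqrtAbsRes lam u j * E * proj (u j)))
      (gj⁻¹ * hsNorm (proj (u j) * E * proj (u j))))

lemma proj_mulVec {d : ℕ} (v x : Fin d → ℝ) : proj v *ᵥ x = (v ⬝ᵥ x) • v := by
  ext i
  simp [proj, vecMulVec_mulVec, mul_comm]

lemma proj_transpose {d : ℕ} (v : Fin d → ℝ) : (proj v)ᵀ = proj v := by
  simp [proj, transpose_vecMulVec]

lemma sum_smul_proj_mulVec {d : ℕ} (s : Finset (Fin d)) (c : Fin d → ℝ) (u : Fin d → Fin d → ℝ)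
    (x : Fin d → ℝ) :
    (∑ k ∈ s, c k • proj (u k)) *ᵥ x = ∑ k ∈ s, (c k * (u k ⬝ᵥ x)) • u k := by
  simp [sum_mulVec, smul_mulVec, proj_mulVec, smul_smul]

lemma dotProduct_sum_smul_proj_mulVec {d : ℕ} (c : Fin d → ℝ) (u : Fin d → Fin d → ℝ)
    (x : Fin d → ℝ) :
    x ⬝ᵥ (∑ k, c k • proj (u k)) *ᵥ x = ∑ k, c k * (u k ⬝ᵥ x) ^ 2 := by
  rw [sum_smul_proj_mulVec, dotProduct_sum]
  refine sum_congr rfl fun k _ => ?_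
  rw [dotProduct_smul, dotProduct_comm x, smul_eq_mul]
  ring

lemma sqrtAbsRes_transpose {d : ℕ} (lam : Fin d → ℝ) (u : Fin d → Fin d → ℝ) (j : Fin d) :
    (sqrtAbsRes lam u j)ᵀ = sqrtAbsRes lam u j := by
  simp [sqrtAbsRes, transpose_sum, proj_transpose]

lemma dotProduct_self_nonneg {d : ℕ} (v : Fin d → ℝ) : 0 ≤ v ⬝ᵥ v :=
  dotProduct_self_star_nonneg v

lemma hsNorm_vecMulVec_sq {d : ℕ} (a b : Fin d → ℝ) :
    hsNorm (vecMulVec a b) ^ 2 = (a ⬝ᵥ a) * (b ⬝ᵥ b) := by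
  have h : trace ((vecMulVec a b)ᵀ * vecMulVec a b) = (a ⬝ᵥ a) * (b ⬝ᵥ b) := by
    rw [transpose_vecMulVec, vecMulVec_mul_vecMulVec, trace_vecMulVec, dotProduct_smul,
      smul_eq_mul]
  rw [hsNorm, h, Real.sq_sqrt]
  exact mul_nonneg (dotProduct_self_nonneg a) (dotProduct_self_nonneg b)

lemma hsNorm_nonneg {d : ℕ} (A : Matrix (Fin d) (Fin d) ℝ) : 0 ≤ hsNorm A :=
  Real.sqrt_nonneg _

lemma proj_mul_mul {d : ℕ} (v : Fin d → ℝ) {E S : Matrix (Fin d) (Fin d) ℝ} (hE : Eᵀ = E)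
    (hS : Sᵀ = S) : proj v * E * S = vecMulVec v (S *ᵥ E *ᵥ v) := by
  rw [proj, vecMulVec_mul, vecMulVec_mul, ← vecMul_transpose, ← vecMul_transpose, hE, hS]

lemma mul_mul_proj {d : ℕ} (v : Fin d → ℝ) (E S : Matrix (Fin d) (Fin d) ℝ) :
    S * E * proj v = vecMulVec (S *ᵥ E *ᵥ v) v := by
  rw [proj, mul_vecMulVec, mulVec_mulVec]

lemma abs_dotProduct_le {d : ℕ} (v w : Fin d → ℝ) :
    |v ⬝ᵥ w| ≤ √(v ⬝ᵥ v) * √(w ⬝ᵥ w) := by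
  rw [← Real.sqrt_mul (dotProduct_self_nonneg v)]
  refine Real.abs_le_sqrt ?_
  simpa [dotProduct, pow_two] using sum_mul_sq_le_sq_mul_sq univ v w

lemma abs_dotProduct_mulVec_le {d : ℕ} (A : Matrix (Fin d) (Fin d) ℝ) (w : Fin d → ℝ) :
    |w ⬝ᵥ A *ᵥ w| ≤ opNorm A * (w ⬝ᵥ w) := by
  have hn : ‖WithLp.toLp 2 w‖ * ‖WithLp.toLp 2 w‖ = w ⬝ᵥ w := by
    rw [← real_inner_self_eq_norm_mul_norm, EuclideanSpace.inner_toLp_toLp]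
    simp
  have hi : w ⬝ᵥ A *ᵥ w =
      inner ℝ (toEuclideanCLM (𝕜 := ℝ) A (WithLp.toLp 2 w)) (WithLp.toLp 2 w) := by
    rw [toEuclideanCLM_toLp, EuclideanSpace.inner_toLp_toLp]
    simp
  rw [hi, ← hn, ← mul_assoc]
  refine (abs_real_inner_le_norm _ _).trans ?_
  gcongr
  exact (toEuclideanCLM (𝕜 := ℝ) A).le_opNorm _

lemma sum_dotProduct_smul {d : ℕ} {u : Fin d → Fin d → ℝ}
    (hON : ∀ k l, u k ⬝ᵥ u l = if k = l then (1 : ℝ) else 0) (x : Fin d → ℝ) :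
    ∑ k, (u k ⬝ᵥ x) • u k = x := by
  have h1 : of u * (of u)ᵀ = 1 := by
    ext k l
    simpa [mul_apply, dotProduct, one_apply] using hON k l
  have h2 : (of u)ᵀ * of u = 1 := mul_eq_one_comm.mp h1
  have h3 : (of u)ᵀ *ᵥ (of u *ᵥ x) = x := by rw [mulVec_mulVec, h2, one_mulVec]
  conv_rhs => rw [← h3]
  ext i
  simp [mulVec, dotProduct, mul_comm]

lemma dotProduct_sum_smul {d : ℕ} {u : Fin d → Fin d → ℝ}
    (hON : ∀ k l, u k ⬝ᵥ u l = if k = l then (1 : ℝ) else 0) (s : Finset (Fin d))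
    (c : Fin d → ℝ) (l : Fin d) :
    u l ⬝ᵥ ∑ k ∈ s, c k • u k = if l ∈ s then c l else 0 := by
  simp [dotProduct_sum, hON]

lemma sum_dotProduct_sq {d : ℕ} {u : Fin d → Fin d → ℝ}
    (hON : ∀ k l, u k ⬝ᵥ u l = if k = l then (1 : ℝ) else 0) (x : Fin d → ℝ) :
    ∑ k, (u k ⬝ᵥ x) ^ 2 = x ⬝ᵥ x := by
  conv_rhs => rw [← sum_dotProduct_smul hON x]
  rw [sum_dotProduct]
  refine sum_congr rfl fun k _ => ?_
  rw [smul_dotProduct, sum_dotProduct_smul hON, smul_eq_mul, pow_two]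

lemma exists_ne_zero_forall_ne_dotProduct_eq_zero {d : ℕ} (v : Fin d → Fin d → ℝ) (j : Fin d) :
    ∃ x : Fin d → ℝ, x ≠ 0 ∧ ∀ k, k ≠ j → v k ⬝ᵥ x = 0 := by
  let f : (Fin d → ℝ) →ₗ[ℝ] ({k // k ≠ j} → ℝ) :=
    LinearMap.pi fun k => dotProductBilin ℝ ℝ (v k)
  have hf : LinearMap.ker f ≠ ⊥ := by
    apply LinearMap.ker_ne_bot_of_finrank_lt
    simpa using Fin.pos j
  obtain ⟨x, hx, hx0⟩ := Submodule.exists_mem_ne_zero_of_ne_bot hf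
  exact ⟨x, hx0, fun k hk => congrFun (LinearMap.mem_ker.mp hx) ⟨k, hk⟩⟩

/-- Splitting `x` into its component along `u j` and the rest, the quadratic form of `E` is
controlled by the weighted blocks of `E`. -/
lemma abs_quadForm_sub_le {d : ℕ} {lam : Fin d → ℝ} {u : Fin d → Fin d → ℝ}
    (hON : ∀ k l, u k ⬝ᵥ u l = if k = l then (1 : ℝ) else 0)
    {E : Matrix (Fin d) (Fin d) ℝ} (hE : Eᵀ = E) (j : Fin d)
    (hne : ∀ k, k ≠ j → 0 < |lam k - lam j|) (x : Fin d → ℝ) :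
    |x ⬝ᵥ E *ᵥ x - (u j ⬝ᵥ E *ᵥ u j) * (u j ⬝ᵥ x) ^ 2| ≤
      opNorm (sqrtAbsRes lam u j * E * sqrtAbsRes lam u j) *
          (∑ k with k ≠ j, |lam k - lam j| * (u k ⬝ᵥ x) ^ 2) +
        2 * |u j ⬝ᵥ x| * hsNorm (proj (u j) * E * sqrtAbsRes lam u j) *
          √(∑ k with k ≠ j, |lam k - lam j| * (u k ⬝ᵥ x) ^ 2) := by
  set S := sqrtAbsRes lam u j with hSdef
  have hS : Sᵀ = S := sqrtAbsRes_transpose lam u j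
  have symm_swap : ∀ {A : Matrix (Fin d) (Fin d) ℝ}, Aᵀ = A → ∀ y z : Fin d → ℝ,
      y ⬝ᵥ A *ᵥ z = (A *ᵥ y) ⬝ᵥ z := fun {A} hA y z => by
    rw [dotProduct_mulVec, ← mulVec_transpose, hA]
  set s : Finset (Fin d) := univ.filter (fun k => k ≠ j) with hs
  set w : Fin d → ℝ := ∑ k ∈ s, (√|lam k - lam j| * (u k ⬝ᵥ x)) • u k with hw
  set z : Fin d → ℝ := ∑ k ∈ s, (u k ⬝ᵥ x) • u k with hz
  have hww : w ⬝ᵥ w = ∑ k ∈ s, |lam k - lam j| * (u k ⬝ᵥ x) ^ 2 := by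
    rw [← sum_dotProduct_sq hON w]
    simp only [hw, dotProduct_sum_smul hON]
    rw [← sum_filter_add_sum_filter_not univ (fun k => k ≠ j), ← hs]
    rw [sum_eq_zero (s := univ.filter fun k => ¬ k ≠ j) (by intro k hk; simp_all), add_zero]
    refine sum_congr rfl fun k hk => ?_
    rw [if_pos hk, mul_pow, Real.sq_sqrt (abs_nonneg _)]
  have hSw : S *ᵥ w = z := by
    rw [hSdef, sqrtAbsRes, sum_smul_proj_mulVec, hz, ← hs]
    refine sum_congr rfl fun k hk => ?_
    have hk' : 0 < |lam k - lam j| := hne k (by simpa [hs] using hk)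
    rw [hw, dotProduct_sum_smul hON, if_pos hk,
      inv_mul_cancel_left₀ (Real.sqrt_pos.mpr hk').ne']
  have hx : x = (u j ⬝ᵥ x) • u j + z := by
    conv_lhs => rw [← sum_dotProduct_smul hON x]
    rw [hz, hs, filter_ne', add_sum_erase _ (fun k => (u k ⬝ᵥ x) • u k) (mem_univ j)]
  have hcross : u j ⬝ᵥ E *ᵥ z = (S *ᵥ E *ᵥ u j) ⬝ᵥ w := by
    rw [← hSw, symm_swap hE, symm_swap hS]
  have hzz : z ⬝ᵥ E *ᵥ z = w ⬝ᵥ (S * E * S) *ᵥ w := by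
    rw [← mulVec_mulVec, ← mulVec_mulVec, hSw, symm_swap hS w, hSw]
  have hform : x ⬝ᵥ E *ᵥ x - (u j ⬝ᵥ E *ᵥ u j) * (u j ⬝ᵥ x) ^ 2 =
      w ⬝ᵥ (S * E * S) *ᵥ w + 2 * (u j ⬝ᵥ x) * ((S *ᵥ E *ᵥ u j) ⬝ᵥ w) := by
    generalize u j ⬝ᵥ x = p at hx
    rw [← hzz, ← hcross, hx]
    have : z ⬝ᵥ E *ᵥ u j = u j ⬝ᵥ E *ᵥ z := by rw [symm_swap hE, dotProduct_comm]
    simp only [mulVec_add, mulVec_smul, dotProduct_add, add_dotProduct, dotProduct_smul,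
      smul_dotProduct, smul_eq_mul, this]
    ring
  have hh : hsNorm (proj (u j) * E * S) = √((S *ᵥ E *ᵥ u j) ⬝ᵥ (S *ᵥ E *ᵥ u j)) := by
    rw [eq_comm, Real.sqrt_eq_iff_eq_sq (dotProduct_self_nonneg _) (hsNorm_nonneg _),
      proj_mul_mul _ hE hS, hsNorm_vecMulVec_sq, hON, if_pos rfl, one_mul]
  rw [hform, hh, ← hww]
  refine (abs_add_le _ _).trans (add_le_add (abs_dotProduct_mulVec_le _ _) ?_)
  rw [abs_mul, abs_mul, abs_two, mul_assoc (2 * |u j ⬝ᵥ x|)]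
  gcongr
  exact abs_dotProduct_le _ _

/-- The scalar estimate behind both the upper and the lower eigenvalue bound. -/
lemma le_two_mul_sq_of_quadratic {g D a h N M p r : ℝ} (hD : D ≤ 1 / 4)
    (hN : 0 ≤ N) (hM : 0 ≤ M) (hgM : g * M ≤ N) (ha : |a| ≤ g * D) (hD0 : 0 ≤ D)
    (hpos : 0 < p ^ 2 + M)
    (hr : r * (p ^ 2 + M) ≤ -N - a * M + (D * N + 2 * |p| * h * √N)) :
    r ≤ 2 * h ^ 2 := by
  have hsq : √N ^ 2 = N := Real.sq_sqrt hN
  have haM : -a * M ≤ D * N := by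
    have h1 : -a * M ≤ g * D * M := by
      gcongr
      exact (neg_le_abs a).trans ha
    nlinarith [mul_le_mul_of_nonneg_left hgM hD0]
  have hDN : D * N ≤ 1 / 4 * N := by gcongr
  have hp : |p| ^ 2 = p ^ 2 := sq_abs p
  have key : r * (p ^ 2 + M) ≤ 2 * h ^ 2 * (p ^ 2 + M) := by
    nlinarith [sq_nonneg (√N - 2 * |p| * h), mul_nonneg (sq_nonneg h) hM]
  exact le_of_mul_le_mul_right key hpos

/-- Quadratic perturbation bound for a simple eigenvalue. -/
lemma abs_eigenvalue_sub_le {d : ℕ} {lam : Fin d → ℝ} {u : Fin d → Fin d → ℝ}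
    (hON : ∀ k l, u k ⬝ᵥ u l = if k = l then (1 : ℝ) else 0)
    (hlam : Antitone lam)
    {E : Matrix (Fin d) (Fin d) ℝ} (hE : Eᵀ = E) (j : Fin d) {g D : ℝ} (hg : 0 < g)
    (hgap : ∀ k, k ≠ j → g ≤ |lam k - lam j|)
    {lamh : Fin d → ℝ} {uh : Fin d → Fin d → ℝ}
    (hONh : ∀ k l, uh k ⬝ᵥ uh l = if k = l then (1 : ℝ) else 0)
    (hlamh : Antitone lamh)
    (hdecomp : (∑ k, lam k • proj (u k)) + E = ∑ k, lamh k • proj (uh k))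
    (hDop : opNorm (sqrtAbsRes lam u j * E * sqrtAbsRes lam u j) ≤ D)
    (hDa : |u j ⬝ᵥ E *ᵥ u j| ≤ g * D) (hD : D ≤ 1 / 4) :
    |lamh j - lam j - u j ⬝ᵥ E *ᵥ u j| ≤
      2 * hsNorm (proj (u j) * E * sqrtAbsRes lam u j) ^ 2 := by
  have hD0 : 0 ≤ D := (norm_nonneg _).trans hDop
  set a := u j ⬝ᵥ E *ᵥ u j
  set h := hsNorm (proj (u j) * E * sqrtAbsRes lam u j)
  have hquad : ∀ x, x ⬝ᵥ E *ᵥ x =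
      ∑ k, lamh k * (uh k ⬝ᵥ x) ^ 2 - ∑ k, lam k * (u k ⬝ᵥ x) ^ 2 := fun x => by
    rw [← dotProduct_sum_smul_proj_mulVec, ← dotProduct_sum_smul_proj_mulVec, ← hdecomp,
      add_mulVec, dotProduct_add]
    ring
  -- Write `x ⬝ᵥ x = p ^ 2 + M`, with `N` the gap-weighted version of `M`.
  have hsplit : ∀ x, (u j ⬝ᵥ x) ^ 2 + ∑ k with k ≠ j, (u k ⬝ᵥ x) ^ 2 = x ⬝ᵥ x := fun x => by
    rw [← sum_dotProduct_sq hON x, filter_ne',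
      add_sum_erase _ (fun k => (u k ⬝ᵥ x) ^ 2) (mem_univ j)]
  have hgM : ∀ x, g * ∑ k with k ≠ j, (u k ⬝ᵥ x) ^ 2 ≤
      ∑ k with k ≠ j, |lam k - lam j| * (u k ⬝ᵥ x) ^ 2 := fun x => by
    rw [mul_sum]
    refine sum_le_sum fun k hk => ?_
    gcongr
    exact hgap k (by simpa using hk)
  have hshift : ∀ x, ∑ k, lam k * (u k ⬝ᵥ x) ^ 2 - lam j * (x ⬝ᵥ x) =
      ∑ k with k ≠ j, (lam k - lam j) * (u k ⬝ᵥ x) ^ 2 := fun x => by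
    rw [← sum_dotProduct_sq hON x, mul_sum, ← sum_sub_distrib, filter_ne',
      ← add_sum_erase _ _ (mem_univ j), sub_self, zero_add]
    simp only [sub_mul]
  have hbound : ∀ x, |x ⬝ᵥ E *ᵥ x - a * (u j ⬝ᵥ x) ^ 2| ≤
      D * (∑ k with k ≠ j, |lam k - lam j| * (u k ⬝ᵥ x) ^ 2) +
        2 * |u j ⬝ᵥ x| * h * √(∑ k with k ≠ j, |lam k - lam j| * (u k ⬝ᵥ x) ^ 2) := fun x => by
    refine (abs_quadForm_sub_le hON hE j (fun k hk => hg.trans_le (hgap k hk)) x).trans ?_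
    gcongr
  have hN : ∀ x, 0 ≤ ∑ k with k ≠ j, |lam k - lam j| * (u k ⬝ᵥ x) ^ 2 := fun x => by positivity
  have hM : ∀ x, 0 ≤ ∑ k with k ≠ j, (u k ⬝ᵥ x) ^ 2 := fun x => by positivity
  have hpos : ∀ x : Fin d → ℝ, x ≠ 0 → 0 < x ⬝ᵥ x := fun x hx =>
    (dotProduct_self_nonneg x).lt_of_ne' (by simpa using hx)
  rw [abs_le']
  constructor
  · obtain ⟨x, hx, hv⟩ :=
      exists_ne_zero_forall_ne_dotProduct_eq_zero (fun k => if k < j then u k else uh k) j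
    have hlow : lamh j * (x ⬝ᵥ x) ≤ ∑ k, lamh k * (uh k ⬝ᵥ x) ^ 2 := by
      rw [← sum_dotProduct_sq hONh x, mul_sum]
      refine sum_le_sum fun k _ => ?_
      rcases le_or_gt k j with hk | hk
      · gcongr
        exact hlamh hk
      · have := hv k hk.ne'
        rw [if_neg hk.not_gt] at this
        simp [this]
    have hneg : ∑ k with k ≠ j, (lam k - lam j) * (u k ⬝ᵥ x) ^ 2 =
        -∑ k with k ≠ j, |lam k - lam j| * (u k ⬝ᵥ x) ^ 2 := by
      rw [← sum_neg_distrib]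
      refine sum_congr rfl fun k hk => ?_
      rcases lt_or_ge k j with hk' | hk'
      · have := hv k hk'.ne
        rw [if_pos hk'] at this
        simp [this]
      · rw [abs_of_nonpos (sub_nonpos.mpr (hlam hk'))]
        ring
    refine le_two_mul_sq_of_quadratic hD (hN x) (hM x) (hgM x) hDa hD0
      (by rw [hsplit]; exact hpos x hx) (p := u j ⬝ᵥ x) ?_
    have h1 := (abs_le.mp (hbound x)).2
    have h2 := hshift x
    have h3 := hquad x
    rw [hneg] at h2
    rw [← hsplit x] at h2 hlow
    linarith
  · obtain ⟨x, hx, hv⟩ :=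
      exists_ne_zero_forall_ne_dotProduct_eq_zero (fun k => if k < j then uh k else u k) j
    have hupp : ∑ k, lamh k * (uh k ⬝ᵥ x) ^ 2 ≤ lamh j * (x ⬝ᵥ x) := by
      rw [← sum_dotProduct_sq hONh x, mul_sum]
      refine sum_le_sum fun k _ => ?_
      rcases lt_or_ge k j with hk | hk
      · have := hv k hk.ne
        rw [if_pos hk] at this
        simp [this]
      · gcongr
        exact hlamh hk
    have hposs : ∑ k with k ≠ j, (lam k - lam j) * (u k ⬝ᵥ x) ^ 2 =
        ∑ k with k ≠ j, |lam k - lam j| * (u k ⬝ᵥ x) ^ 2 := by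
      refine sum_congr rfl fun k hk => ?_
      rcases le_or_gt k j with hk' | hk'
      · rw [abs_of_nonneg (sub_nonneg.mpr (hlam hk'))]
      · have := hv k hk'.ne'
        rw [if_neg hk'.not_gt] at this
        simp [this]
    refine le_two_mul_sq_of_quadratic (a := -a) hD (hN x) (hM x) (hgM x)
      (by rwa [abs_neg]) hD0 (by rw [hsplit]; exact hpos x hx) (p := u j ⬝ᵥ x) ?_
    have h1 := (abs_le.mp (hbound x)).1
    have h2 := hshift x
    have h3 := hquad x
    rw [hposs] at h2
    rw [← hsplit x] at h2 hupp
    linarith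

theorem stmt12 {d : ℕ} (lam : Fin d → ℝ) (u : Fin d → Fin d → ℝ)
    (hON : ∀ k l, u k ⬝ᵥ u l = if k = l then (1 : ℝ) else 0)
    (hlam : Antitone lam)
    (E : Matrix (Fin d) (Fin d) ℝ) (hE : E.IsSymm)
    (j : Fin d) (gj : ℝ) (hgj_pos : 0 < gj)
    (hgj : IsLeast {x : ℝ | ∃ k, k ≠ j ∧ x = |lam k - lam j|} gj)
    (lamh : Fin d → ℝ) (uh : Fin d → Fin d → ℝ)
    (hONh : ∀ k l, uh k ⬝ᵥ uh l = if k = l then (1 : ℝ) else 0)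
    (hlamh : Antitone lamh)
    (hdecomp : (∑ k, lam k • proj (u k)) + E = ∑ k, lamh k • proj (uh k))
    (hdelta : delta' lam u j gj E < 1 / 4) :
    |lamh j - lam j - Matrix.trace (proj (u j) * E * proj (u j))| ≤
        8 * hsNorm (proj (u j) * E * sqrtAbsRes lam u j) ^ 2 /
          (1 - 4 * delta' lam u j gj E) ∧
      8 * hsNorm (proj (u j) * E * sqrtAbsRes lam u j) ^ 2 /
          (1 - 4 * delta' lam u j gj E) ≤
        gj * (4 * delta' lam u j gj E) ^ 2 / (1 - 4 * delta' lam u j gj E) := by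
  have hE' : Eᵀ = E := hE
  have hS := sqrtAbsRes_transpose lam u j
  set D := delta' lam u j gj E
  have hjj : u j ⬝ᵥ u j = 1 := by rw [hON, if_pos rfl]
  have hPEP : proj (u j) * E * proj (u j) = (u j ⬝ᵥ E *ᵥ u j) • proj (u j) := by
    rw [mul_mul_proj, proj_mulVec, smul_vecMulVec, proj]
  have htr : trace (proj (u j) * E * proj (u j)) = u j ⬝ᵥ E *ᵥ u j := by
    rw [hPEP, trace_smul, proj, trace_vecMulVec, hjj, smul_eq_mul, mul_one]
  have hPEPn : hsNorm (proj (u j) * E * proj (u j)) = |u j ⬝ᵥ E *ᵥ u j| := by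
    rw [← sq_eq_sq₀ (hsNorm_nonneg _) (abs_nonneg _), sq_abs, mul_mul_proj, hsNorm_vecMulVec_sq,
      proj_mulVec]
    simp only [smul_dotProduct, dotProduct_smul, hjj, smul_eq_mul]
    ring
  have hsym : hsNorm (sqrtAbsRes lam u j * E * proj (u j)) =
      hsNorm (proj (u j) * E * sqrtAbsRes lam u j) := by
    rw [← sq_eq_sq₀ (hsNorm_nonneg _) (hsNorm_nonneg _), mul_mul_proj, proj_mul_mul _ hE' hS,
      hsNorm_vecMulVec_sq, hsNorm_vecMulVec_sq, mul_comm]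
  have hDop : opNorm (sqrtAbsRes lam u j * E * sqrtAbsRes lam u j) ≤ D := le_max_left _ _
  have hDh : (√gj)⁻¹ * hsNorm (proj (u j) * E * sqrtAbsRes lam u j) ≤ D := by
    rw [← hsym]
    exact (le_max_left _ _).trans (le_max_right _ _)
  have hDa : gj⁻¹ * |u j ⬝ᵥ E *ᵥ u j| ≤ D := by
    rw [← hPEPn]
    exact (le_max_right _ _).trans (le_max_right _ _)
  rw [inv_mul_le_iff₀ hgj_pos] at hDa
  rw [inv_mul_le_iff₀ (Real.sqrt_pos.mpr hgj_pos)] at hDh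
  have hD0 : 0 ≤ D := (norm_nonneg _).trans hDop
  have hmain := abs_eigenvalue_sub_le hON hlam hE' j hgj_pos (fun k hk => hgj.2 ⟨k, hk, rfl⟩)
    hONh hlamh hdecomp hDop hDa hdelta.le
  have hden : 0 < 1 - 4 * D := by linarith
  have hh0 := hsNorm_nonneg (proj (u j) * E * sqrtAbsRes lam u j)
  rw [htr]
  constructor
  · refine hmain.trans ((le_div_iff₀ hden).mpr ?_)
    nlinarith [sq_nonneg (hsNorm (proj (u j) * E * sqrtAbsRes lam u j)),
      mul_nonneg hD0 (sq_nonneg (hsNorm (proj (u j) * E * sqrtAbsRes lam u j)))]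
  · refine div_le_div_of_nonneg_right ?_ hden.le
    have h1 := pow_le_pow_left₀ hh0 hDh 2
    rw [mul_pow, Real.sq_sqrt hgj_pos.le] at h1
    nlinarith [mul_nonneg hgj_pos.le (sq_nonneg D)]
end

section
/- Suppose δ'_j < 1/4. Then |λ̂_j − λ_j − tr(P_j E P_j) + tr(P_j E R_j E P_j)| ≤ 8 ‖P_j E |R_j|^{1/2}‖_2^2 · 4δ'_j / (1 − 4δ'_j). -/
open Matrix Finset

open scoped RealInnerProductSpace

section OperatorPerturbation

variable {V : Type*} [NormedAddCommGroup V] [InnerProductSpace ℝ V]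

/-- The operator that is diagonal in the orthonormal basis `b` with eigenvalues `f`. -/
noncomputable def diagOp {ι : Type*} [Fintype ι] (b : OrthonormalBasis ι ℝ V) (f : ι → ℝ)
    (w : V) : V :=
  ∑ k, (f k * ⟪b k, w⟫) • b k

section DiagOp

variable {ι : Type*} [Fintype ι] (b : OrthonormalBasis ι ℝ V)

lemma inner_basis_diagOp (f : ι → ℝ) (w : V) (l : ι) :
    ⟪b l, diagOp b f w⟫ = f l * ⟪b l, w⟫ := by
  classical
  simp [diagOp, inner_sum, inner_smul_right, orthonormal_iff_ite.mp b.orthonormal]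

lemma eq_of_inner_basis_eq {v w : V} (h : ∀ k, ⟪b k, v⟫ = ⟪b k, w⟫) : v = w :=
  b.repr.injective <| PiLp.ext fun k => by simpa [b.repr_apply_apply] using h k

lemma inner_diagOp_right (f : ι → ℝ) (v w : V) :
    ⟪v, diagOp b f w⟫ = ∑ k, f k * ⟪b k, v⟫ * ⟪b k, w⟫ := by
  simp only [diagOp, inner_sum, inner_smul_right, real_inner_comm v]
  exact sum_congr rfl fun k _ => by ring

lemma inner_diagOp_left (f : ι → ℝ) (v w : V) :
    ⟪diagOp b f v, w⟫ = ⟪v, diagOp b f w⟫ := by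
  rw [real_inner_comm, inner_diagOp_right, inner_diagOp_right]
  exact sum_congr rfl fun k _ => by ring

lemma norm_sq_eq_sum_inner_sq (w : V) : ‖w‖ ^ 2 = ∑ k, ⟪b k, w⟫ ^ 2 := by
  simpa using (b.sum_sq_norm_inner_right w).symm

lemma norm_diagOp_sq (f : ι → ℝ) (w : V) :
    ‖diagOp b f w‖ ^ 2 = ∑ k, (f k) ^ 2 * ⟪b k, w⟫ ^ 2 := by
  simp only [norm_sq_eq_sum_inner_sq b, inner_basis_diagOp, mul_pow]

lemma norm_diagOp_le {f : ι → ℝ} {C : ℝ} (hf : ∀ k, |f k| ≤ C) (hC : 0 ≤ C) (w : V) :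
    ‖diagOp b f w‖ ≤ C * ‖w‖ := by
  refine le_of_sq_le_sq ?_ (by positivity)
  rw [norm_diagOp_sq, mul_pow, norm_sq_eq_sum_inner_sq b, mul_sum]
  refine sum_le_sum fun k _ => mul_le_mul_of_nonneg_right ?_ (sq_nonneg _)
  exact sq_le_sq' (abs_le.mp (hf k)).1 (abs_le.mp (hf k)).2

end DiagOp

/-- An eigenvalue `x` of the block operator with corner `a`, coupling `c` and remaining block
`S + G` is close to its second-order expansion `a - ⟪c, S c⟫`, when `x` is at most half of the
gap `g` and `G` is small. -/
lemma abs_schur_expansion_le {S G R : V → V} {a x α g δ : ℝ} {c z : V}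
    (hg : 0 < g) (hδ0 : 0 ≤ δ) (hδ : δ < 1 / 4)
    (hSS : ∀ w, S (S w) = w) (hSsymm : ∀ v w, ⟪S v, w⟫ = ⟪v, S w⟫)
    (hG : ∀ w, ‖G w‖ ≤ δ * ‖w‖) (hR : ∀ w, ‖R w‖ ≤ g⁻¹ * ‖w‖)
    (ha : |a| ≤ g * δ) (hc : ‖c‖ ≤ √g * δ) (hx : |x| ≤ g / 2)
    (hz : S z + α • c + G z = x • R z) (hα : a * α + ⟪c, z⟫ = x * α)
    (hne : α = 0 → z ≠ 0) :
    |x - a + ⟪c, S c⟫| ≤ 8 * ‖c‖ ^ 2 * (4 * δ) / (1 - 4 * δ) := by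
  have hSn : ∀ w, ‖S w‖ = ‖w‖ := fun w => by
    rw [← sq_eq_sq₀ (norm_nonneg _) (norm_nonneg _), ← real_inner_self_eq_norm_sq, hSsymm, hSS,
      real_inner_self_eq_norm_sq]
  have hrem : ∀ t, |x| ≤ t * g → ‖x • R z - G z‖ ≤ (t + δ) * ‖z‖ := fun t ht => by
    have h1 : ‖x • R z‖ ≤ t * ‖z‖ := by
      rw [norm_smul, Real.norm_eq_abs]
      calc |x| * ‖R z‖ ≤ (t * g) * (g⁻¹ * ‖z‖) :=
            mul_le_mul ht (hR z) (norm_nonneg _) ((abs_nonneg x).trans ht)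
        _ = t * ‖z‖ := by field_simp
    linarith [norm_sub_le (x • R z) (G z), hG z]
  have hSz : S z = (x • R z - G z) - α • c := by rw [← hz]; abel
  have hzn : ∀ t, |x| ≤ t * g → (1 - t - δ) * ‖z‖ ≤ |α| * ‖c‖ := fun t ht => by
    have h2 := norm_sub_le (x • R z - G z) (α • c)
    rw [← hSz, hSn, norm_smul, Real.norm_eq_abs] at h2
    linarith [hrem t ht]
  have hx' : |x| ≤ 1 / 2 * g := by linarith
  have hα0 : α ≠ 0 := fun h => by
    have h3 := hzn _ hx'
    rw [h, abs_zero, zero_mul] at h3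
    have : 0 < ‖z‖ := norm_pos_iff.mpr (hne h)
    nlinarith
  have hαpos : 0 < |α| := abs_pos.mpr hα0
  have hinner : |x - a| * |α| ≤ ‖c‖ * ‖z‖ := by
    rw [← abs_mul, show (x - a) * α = ⟪c, z⟫ by linarith]
    exact abs_real_inner_le_norm c z
  have hcsq : ‖c‖ ^ 2 ≤ g * δ ^ 2 := by
    calc ‖c‖ ^ 2 ≤ (√g * δ) ^ 2 := by gcongr
      _ = g * δ ^ 2 := by rw [mul_pow, Real.sq_sqrt hg.le]
  have hz4 : ‖z‖ ≤ 4 * (|α| * ‖c‖) := by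
    nlinarith [hzn _ hx', norm_nonneg z]
  have hxa : |x - a| ≤ g * δ := by
    have h4 : |x - a| * |α| ≤ (4 * ‖c‖ ^ 2) * |α| := by
      nlinarith [mul_le_mul_of_nonneg_left hz4 (norm_nonneg c)]
    have h5 := le_of_mul_le_mul_right h4 hαpos
    nlinarith [mul_nonneg hg.le hδ0]
  have hx2 : |x| ≤ (2 * δ) * g := by
    have := abs_add_le (x - a) a
    rw [sub_add_cancel] at this
    linarith
  have hkey : (x - a + ⟪c, S c⟫) * α = ⟪S c, x • R z - G z⟫ := by
    have h6 : x • R z - G z = S z + α • c := by rw [← hz]; abel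
    rw [h6, inner_add_right, inner_smul_right, hSsymm, hSS, hSsymm]
    linarith
  have hbound : |x - a + ⟪c, S c⟫| * |α| ≤ ‖c‖ * (3 * δ * ‖z‖) := by
    rw [← abs_mul, hkey]
    calc _ ≤ ‖S c‖ * ‖x • R z - G z‖ := abs_real_inner_le_norm _ _
      _ ≤ ‖c‖ * (3 * δ * ‖z‖) := by
        rw [hSn]
        gcongr
        linarith [hrem _ hx2]
  have hz3 : (1 - 3 * δ) * ‖z‖ ≤ |α| * ‖c‖ := by linarith [hzn _ hx2]
  rw [le_div_iff₀ (by linarith)]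
  refine le_of_mul_le_mul_right ?_ hαpos
  have h7 : (1 - 4 * δ) * ‖z‖ ≤ |α| * ‖c‖ := by nlinarith [norm_nonneg z]
  have h8 : 0 ≤ ‖c‖ * δ := by positivity
  have h9 : 0 ≤ ‖c‖ * δ * (|α| * ‖c‖) := by positivity
  nlinarith [mul_le_mul_of_nonneg_right hbound (by linarith : (0 : ℝ) ≤ 1 - 4 * δ),
    mul_le_mul_of_nonneg_left h7 h8]

/-- A vector orthogonal to all but one of `d` given vectors, in dimension `d`. -/
lemma exists_ne_zero_inner_eq_zero {d : ℕ} (b : OrthonormalBasis (Fin d) ℝ V) (j : Fin d)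
    (c : Fin d → V) : ∃ v : V, v ≠ 0 ∧ ∀ k, k ≠ j → ⟪c k, v⟫ = 0 := by
  have : FiniteDimensional ℝ V := b.toBasis.finiteDimensional_of_finite
  let f : V →ₗ[ℝ] ({k : Fin d // k ≠ j} → ℝ) := LinearMap.pi fun k => innerₗ V (c k)
  have hlt : Module.finrank ℝ ({k : Fin d // k ≠ j} → ℝ) < Module.finrank ℝ V := by
    rw [Module.finrank_fintype_fun_eq_card, Module.finrank_eq_card_basis b.toBasis]
    exact Fintype.card_subtype_lt (x := j) (by simp)
  obtain ⟨v, hv, hv0⟩ := (Submodule.ne_bot_iff _).mp (LinearMap.ker_ne_bot_of_finrank_lt (f := f) hlt)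
  exact ⟨v, hv0, fun k hk => congrFun (LinearMap.mem_ker.mp hv) ⟨k, hk⟩⟩

/-- Weights of the square root of the absolute reduced resolvent. -/
noncomputable def sqrtAbsResWeight {d : ℕ} (lam : Fin d → ℝ) (j k : Fin d) : ℝ :=
  if k ≠ j then (√|lam k - lam j|)⁻¹ else 0

/-- Weights of the square root of the absolute value of the operator, shifted by `lam j`. -/
noncomputable def sqrtAbsShiftWeight {d : ℕ} (lam : Fin d → ℝ) (j k : Fin d) : ℝ :=
  if k ≠ j then √|lam k - lam j| else 0

/-- Weights of the reduced resolvent. -/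
noncomputable def resWeight {d : ℕ} (lam : Fin d → ℝ) (j k : Fin d) : ℝ :=
  if k ≠ j then (lam k - lam j)⁻¹ else 0

section Location

variable {d : ℕ} (b : OrthonormalBasis (Fin d) ℝ V) {lam : Fin d → ℝ} {j : Fin d} {g : ℝ}

lemma sqrtAbsResWeight_mul_sqrtAbsShiftWeight (hg : 0 < g)
    (hgap : ∀ k, k ≠ j → g ≤ |lam k - lam j|) {k : Fin d} (hk : k ≠ j) :
    sqrtAbsResWeight lam j k * sqrtAbsShiftWeight lam j k = 1 := by
  have : 0 < √|lam k - lam j| := Real.sqrt_pos.mpr (hg.trans_le (hgap k hk))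
  simp [sqrtAbsResWeight, sqrtAbsShiftWeight, hk, this.ne']

lemma eq_smul_add_diagOp (hg : 0 < g) (hgap : ∀ k, k ≠ j → g ≤ |lam k - lam j|) (v : V) :
    v = ⟪b j, v⟫ • b j +
      diagOp b (sqrtAbsResWeight lam j) (diagOp b (sqrtAbsShiftWeight lam j) v) := by
  refine eq_of_inner_basis_eq b fun k => ?_
  rw [inner_add_right, inner_smul_right, inner_basis_diagOp, inner_basis_diagOp,
    orthonormal_iff_ite.mp b.orthonormal]
  by_cases hk : k = j
  · subst hk
    simp [sqrtAbsResWeight]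
  · rw [← mul_assoc, sqrtAbsResWeight_mul_sqrtAbsShiftWeight hg hgap hk]
    simp [hk]

/-- On the span of `b j` and of the eigenvectors on one side of `lam j`, the perturbed operator
exceeds `lam j` by at most half of the gap. -/
lemma quadratic_form_le_half_gap {E : V →ₗ[ℝ] V} (hE : E.IsSymmetric) {δ ε : ℝ}
    (hg : 0 < g) (hgap : ∀ k, k ≠ j → g ≤ |lam k - lam j|)
    (hδ : δ < 1 / 4) (hε : |ε| = 1)
    (hG : ∀ w, ‖diagOp b (sqrtAbsResWeight lam j)
      (E (diagOp b (sqrtAbsResWeight lam j) w))‖ ≤ δ * ‖w‖)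
    (hc : ‖diagOp b (sqrtAbsResWeight lam j) (E (b j))‖ ≤ √g * δ)
    (ha : |⟪b j, E (b j)⟫| ≤ g * δ)
    {v : V} (hv : ∀ k, ⟪b k, v⟫ ≠ 0 → ε * (lam k - lam j) ≤ 0) :
    ε * (⟪v, diagOp b lam v + E v⟫ - lam j * ‖v‖ ^ 2) ≤ g / 2 * ‖v‖ ^ 2 := by
  set s := sqrtAbsResWeight lam j
  set z := diagOp b (sqrtAbsShiftWeight lam j) v with hz
  set c := diagOp b s (E (b j))
  set α := ⟪b j, v⟫
  have hvz : v = α • b j + diagOp b s z := eq_smul_add_diagOp b hg hgap v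
  have hform : ⟪v, E v⟫ = α ^ 2 * ⟪b j, E (b j)⟫ + 2 * α * ⟪c, z⟫ +
      ⟪z, diagOp b s (E (diagOp b s z))⟫ := by
    have h1 : ⟪b j, E (diagOp b s z)⟫ = ⟪c, z⟫ := by rw [← hE, ← inner_diagOp_left]
    have h2 : ⟪diagOp b s z, E (b j)⟫ = ⟪c, z⟫ := by
      rw [inner_diagOp_left, real_inner_comm]
    rw [← inner_diagOp_left b s z]
    conv_lhs => rw [hvz]
    simp only [map_add, map_smul, inner_add_left, inner_add_right, real_inner_smul_left,
      inner_smul_right, h1, h2]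
    ring
  have hdiag : ε * (⟪v, diagOp b lam v⟫ - lam j * ‖v‖ ^ 2) = -‖z‖ ^ 2 := by
    rw [inner_diagOp_right, hz, norm_diagOp_sq, norm_sq_eq_sum_inner_sq b, mul_sum,
      ← sum_sub_distrib, mul_sum, ← sum_neg_distrib]
    refine sum_congr rfl fun k _ => ?_
    by_cases hk : k = j
    · subst hk
      simp [sqrtAbsShiftWeight]; right; ring
    by_cases h0 : ⟪b k, v⟫ = 0
    · simp [h0]
    have h3 : |lam k - lam j| = -(ε * (lam k - lam j)) := by
      rw [← abs_of_nonpos (hv k h0), abs_mul, hε, one_mul]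
    rw [sqrtAbsShiftWeight, if_pos hk, Real.sq_sqrt (abs_nonneg _), h3]
    ring
  have hαv : α ^ 2 ≤ ‖v‖ ^ 2 := by
    rw [norm_sq_eq_sum_inner_sq b]
    exact single_le_sum (f := fun k => ⟪b k, v⟫ ^ 2) (fun k _ => sq_nonneg _) (mem_univ j)
  have hG' : |⟪z, diagOp b s (E (diagOp b s z))⟫| ≤ 1 / 4 * ‖z‖ ^ 2 := by
    refine (abs_real_inner_le_norm _ _).trans ?_
    nlinarith [mul_le_mul_of_nonneg_left (hG z) (norm_nonneg z), sq_nonneg ‖z‖]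
  have hc' : |α * ⟪c, z⟫| ≤ 1 / 4 * ((√g * |α|) * ‖z‖) := by
    rw [abs_mul]
    have h4 : |⟪c, z⟫| ≤ √g * (1 / 4) * ‖z‖ := (abs_real_inner_le_norm _ _).trans
      (by gcongr; exact hc.trans (by gcongr))
    nlinarith [mul_le_mul_of_nonneg_left h4 (abs_nonneg α)]
  have ha' : |α ^ 2 * ⟪b j, E (b j)⟫| ≤ 1 / 4 * (√g * |α|) ^ 2 := by
    rw [abs_mul, abs_of_nonneg (sq_nonneg α), mul_pow, Real.sq_sqrt hg.le, sq_abs]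
    nlinarith [mul_le_mul_of_nonneg_left (ha.trans (mul_le_mul_of_nonneg_left hδ.le hg.le))
      (sq_nonneg α)]
  have hE' : ε * ⟪v, E v⟫ ≤ 1 / 4 * (√g * |α|) ^ 2 + 2 * (1 / 4 * ((√g * |α|) * ‖z‖)) +
      1 / 4 * ‖z‖ ^ 2 := by
    refine (le_abs_self _).trans ?_
    rw [abs_mul, hε, one_mul, hform, mul_assoc]
    refine (abs_add_three _ _ _).trans ?_
    rw [abs_mul 2, abs_two]
    linarith
  have hgα : (√g * |α|) ^ 2 ≤ g * ‖v‖ ^ 2 := by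
    rw [mul_pow, Real.sq_sqrt hg.le, sq_abs]
    gcongr
  rw [inner_add_right, add_sub_right_comm, mul_add, hdiag]
  nlinarith [sq_nonneg (√g * |α| - ‖z‖), sq_nonneg ‖z‖]

end Location

/-- Second-order expansion of a simple eigenvalue under a perturbation that is small relative to
the reduced resolvent. -/
theorem abs_eigenvalue_expansion_le {d : ℕ} (b bh : OrthonormalBasis (Fin d) ℝ V)
    {lam lamh : Fin d → ℝ} (hlam : Antitone lam) (hlamh : Antitone lamh) {j : Fin d} {g δ : ℝ}
    {E : V →ₗ[ℝ] V} (hE : E.IsSymmetric)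
    (hg : 0 < g) (hgap : ∀ k, k ≠ j → g ≤ |lam k - lam j|) (hδ0 : 0 ≤ δ) (hδ : δ < 1 / 4)
    (hG : ∀ w, ‖diagOp b (sqrtAbsResWeight lam j)
      (E (diagOp b (sqrtAbsResWeight lam j) w))‖ ≤ δ * ‖w‖)
    (hc : ‖diagOp b (sqrtAbsResWeight lam j) (E (b j))‖ ≤ √g * δ)
    (ha : |⟪b j, E (b j)⟫| ≤ g * δ)
    (hdecomp : ∀ w, diagOp b lam w + E w = diagOp bh lamh w) :
    |lamh j - lam j - ⟪b j, E (b j)⟫ + ⟪E (b j), diagOp b (resWeight lam j) (E (b j))⟫| ≤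
      8 * ‖diagOp b (sqrtAbsResWeight lam j) (E (b j))‖ ^ 2 * (4 * δ) / (1 - 4 * δ) := by
  have hupper : lamh j - lam j ≤ g / 2 := by
    obtain ⟨v, hv0, hv⟩ := exists_ne_zero_inner_eq_zero b j fun k => if k < j then b k else bh k
    have hq := quadratic_form_le_half_gap b hE hg hgap hδ (ε := 1) (by simp) hG hc ha (v := v)
      (fun k hk => by
        have : j ≤ k := not_lt.mp fun h => hk (by simpa [h] using hv k h.ne)
        linarith [hlam this])
    have hh : lamh j * ‖v‖ ^ 2 ≤ ⟪v, diagOp bh lamh v⟫ := by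
      rw [inner_diagOp_right, norm_sq_eq_sum_inner_sq bh, mul_sum]
      refine sum_le_sum fun k _ => ?_
      rcases le_or_gt k j with h | h
      · nlinarith [hlamh h, sq_nonneg ⟪bh k, v⟫]
      · have : ⟪bh k, v⟫ = 0 := by simpa [h.not_gt] using hv k h.ne'
        simp [this]
    rw [hdecomp] at hq
    have : 0 < ‖v‖ ^ 2 := by positivity
    nlinarith
  have hlower : -(g / 2) ≤ lamh j - lam j := by
    obtain ⟨v, hv0, hv⟩ := exists_ne_zero_inner_eq_zero b j fun k => if j < k then b k else bh k
    have hq := quadratic_form_le_half_gap b hE hg hgap hδ (ε := -1) (by simp) hG hc ha (v := v)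
      (fun k hk => by
        have : k ≤ j := not_lt.mp fun h => hk (by simpa [h] using hv k h.ne')
        linarith [hlam this])
    have hh : ⟪v, diagOp bh lamh v⟫ ≤ lamh j * ‖v‖ ^ 2 := by
      rw [inner_diagOp_right, norm_sq_eq_sum_inner_sq bh, mul_sum]
      refine sum_le_sum fun k _ => ?_
      rcases le_or_gt j k with h | h
      · nlinarith [hlamh h, sq_nonneg ⟪bh k, v⟫]
      · have : ⟪bh k, v⟫ = 0 := by simpa [h.not_gt] using hv k h.ne
        simp [this]
    rw [hdecomp] at hq
    have : 0 < ‖v‖ ^ 2 := by positivity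
    nlinarith
  set s := sqrtAbsResWeight lam j with hs
  set v := bh j with hv
  set z := diagOp b (sqrtAbsShiftWeight lam j) v with hz
  let σ : Fin d → ℝ := fun k => if lam k < lam j then -1 else 1
  have hσ : ∀ k, σ k * σ k = 1 := fun k => by dsimp only [σ]; split_ifs <;> norm_num
  have hvz : v = ⟪b j, v⟫ • b j + diagOp b s z := eq_smul_add_diagOp b hg hgap v
  have heig : diagOp b lam v + E v = lamh j • v := by
    rw [hdecomp]
    refine eq_of_inner_basis_eq bh fun k => ?_
    rw [inner_basis_diagOp, inner_smul_right, hv, orthonormal_iff_ite.mp bh.orthonormal]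
    split_ifs with h <;> simp [h]
  have hEv : E v = ⟪b j, v⟫ • E (b j) + E (diagOp b s z) := by
    conv_lhs => rw [hvz, map_add, map_smul]
  have hcoord : ∀ k, lam k * ⟪b k, v⟫ + ⟪b k, E v⟫ = lamh j * ⟪b k, v⟫ := fun k => by
    have := congrArg (fun w => ⟪b k, w⟫) heig
    simpa [inner_add_right, inner_smul_right, inner_basis_diagOp] using this
  have hres : ∀ k, s k * (σ k * s k) = resWeight lam j k := fun k => by
    by_cases hk : k = j
    · simp [hs, sqrtAbsResWeight, resWeight, hk]
    have habs := hgap k hk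
    simp only [hs, sqrtAbsResWeight, resWeight, if_pos (show k ≠ j from hk), σ]
    have hsq : (√|lam k - lam j|)⁻¹ * (√|lam k - lam j|)⁻¹ = |lam k - lam j|⁻¹ := by
      rw [← mul_inv, Real.mul_self_sqrt (abs_nonneg _)]
    rw [mul_left_comm, hsq]
    split_ifs with h
    · rw [abs_of_neg (by linarith), inv_neg]; ring
    · rw [abs_of_nonneg (by linarith), one_mul]
  have hcSc : ⟪diagOp b s (E (b j)), diagOp b σ (diagOp b s (E (b j)))⟫ =
      ⟪E (b j), diagOp b (resWeight lam j) (E (b j))⟫ := by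
    rw [inner_diagOp_left]
    congr 1
    refine eq_of_inner_basis_eq b fun k => ?_
    simp only [inner_basis_diagOp, ← hres]
    ring
  rw [← hcSc]
  refine abs_schur_expansion_le (S := diagOp b σ) (G := fun w => diagOp b s (E (diagOp b s w)))
    (R := diagOp b fun k => s k * s k) (α := ⟪b j, v⟫) (z := z) hg hδ0 hδ (fun w => ?_)
    (inner_diagOp_left b σ) hG (norm_diagOp_le b (fun k => ?_) (by positivity)) ha hc
    (abs_le.mpr ⟨hlower, hupper⟩) ?_ ?_ fun hα hz0 => ?_
  · refine eq_of_inner_basis_eq b fun k => ?_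
    rw [inner_basis_diagOp, inner_basis_diagOp, ← mul_assoc, hσ, one_mul]
  · rw [abs_mul_self]
    by_cases hk : k = j
    · simp [hs, sqrtAbsResWeight, hk, hg.le]
    · simp only [hs, sqrtAbsResWeight, if_pos (show k ≠ j from hk)]
      rw [← mul_inv, Real.mul_self_sqrt (abs_nonneg _)]
      exact inv_anti₀ hg (hgap k hk)
  · refine eq_of_inner_basis_eq b fun k => ?_
    have hk' : ⟪b k, E v⟫ = ⟪b j, v⟫ * ⟪b k, E (b j)⟫ + ⟪b k, E (diagOp b s z)⟫ := by
      rw [hEv, inner_add_right, inner_smul_right]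
    simp only [inner_add_right, inner_smul_right, inner_basis_diagOp]
    by_cases hk : k = j
    · simp [hs, hz, sqrtAbsResWeight, sqrtAbsShiftWeight, hk, inner_basis_diagOp]
    have hst : s k * sqrtAbsShiftWeight lam j k = 1 :=
      sqrtAbsResWeight_mul_sqrtAbsShiftWeight hg hgap hk
    have hσμ : σ k * sqrtAbsShiftWeight lam j k = s k * (lam k - lam j) := by
      have hinv : resWeight lam j k * (lam k - lam j) = 1 := by
        have : 0 < |lam k - lam j| := hg.trans_le (hgap k hk)
        simp only [resWeight, if_pos (show k ≠ j from hk)]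
        exact inv_mul_cancel₀ (abs_pos.mp this)
      rw [← hres] at hinv
      calc _ = σ k * sqrtAbsShiftWeight lam j k * (s k * (σ k * s k) * (lam k - lam j)) := by
            rw [hinv, mul_one]
        _ = (σ k * σ k) * (s k * sqrtAbsShiftWeight lam j k) * (s k * (lam k - lam j)) := by ring
        _ = _ := by rw [hσ, hst]; ring
    rw [hz, inner_basis_diagOp, ← mul_assoc, hσμ]
    have := hcoord k
    rw [hk'] at this
    linear_combination s k * this - (lamh j - lam j) * s k * ⟪b k, v⟫ * hst
  · have h1 := hcoord j
    have h2 : ⟪diagOp b s (E (b j)), z⟫ = ⟪b j, E (diagOp b s z)⟫ := by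
      rw [inner_diagOp_left, hE]
    rw [hEv, inner_add_right, inner_smul_right] at h1
    rw [h2]
    linarith
  · have hv1 : ‖v‖ = 1 := bh.orthonormal.1 j
    rw [hvz, hα, hz0] at hv1
    simp [diagOp] at hv1

end OperatorPerturbation

section MatrixBridge

variable {d : ℕ}

lemma exists_orthonormalBasis_toLp {u : Fin d → Fin d → ℝ}
    (hON : ∀ k l, u k ⬝ᵥ u l = if k = l then (1 : ℝ) else 0) :
    ∃ b : OrthonormalBasis (Fin d) ℝ (EuclideanSpace ℝ (Fin d)), ∀ k, b k = WithLp.toLp 2 (u k) := by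
  have hon : Orthonormal ℝ fun k => WithLp.toLp 2 (u k) := orthonormal_iff_ite.mpr fun k l => by
    simp [EuclideanSpace.inner_toLp_toLp, hON, eq_comm]
  have hspan := hon.linearIndependent.span_eq_top_of_card_eq_finrank' (by simp)
  exact ⟨OrthonormalBasis.mk hon hspan.ge, fun k => by simp⟩

lemma toEuclideanCLM_sum_smul_proj {u : Fin d → Fin d → ℝ}
    {b : OrthonormalBasis (Fin d) ℝ (EuclideanSpace ℝ (Fin d))}
    (hb : ∀ k, b k = WithLp.toLp 2 (u k)) (f : Fin d → ℝ) (w : EuclideanSpace ℝ (Fin d)) :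
    toEuclideanCLM (𝕜 := ℝ) (∑ k, f k • proj (u k)) w = diagOp b f w := by
  apply WithLp.ofLp_injective
  rw [ofLp_toEuclideanCLM, Matrix.sum_mulVec, diagOp, WithLp.ofLp_sum]
  refine sum_congr rfl fun k _ => ?_
  rw [Matrix.smul_mulVec, proj, vecMulVec_mulVec, hb, WithLp.ofLp_smul, mul_smul,
    EuclideanSpace.inner_eq_star_dotProduct, dotProduct_comm]
  simp

lemma sqrtAbsRes_eq_sum (lam : Fin d → ℝ) (u : Fin d → Fin d → ℝ) (j : Fin d) :
    sqrtAbsRes lam u j = ∑ k, sqrtAbsResWeight lam j k • proj (u k) := by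
  simp [sqrtAbsRes, sqrtAbsResWeight, sum_filter, ite_smul]

lemma res_eq_sum (lam : Fin d → ℝ) (u : Fin d → Fin d → ℝ) (j : Fin d) :
    res lam u j = ∑ k, resWeight lam j k • proj (u k) := by
  simp [res, resWeight, sum_filter, ite_smul]

lemma proj_isSymm (v : Fin d → ℝ) : (proj v).IsSymm := by
  ext i k
  simp [proj, vecMulVec_apply, mul_comm]

lemma sqrtAbsRes_isSymm (lam : Fin d → ℝ) (u : Fin d → Fin d → ℝ) (j : Fin d) :
    (sqrtAbsRes lam u j).IsSymm := by
  simp only [Matrix.IsSymm, sqrtAbsRes, transpose_sum, transpose_smul, (proj_isSymm _).eq]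

lemma trace_proj_mul_mul_proj {v : Fin d → ℝ} (hv : v ⬝ᵥ v = 1) (M : Matrix (Fin d) (Fin d) ℝ) :
    trace (proj v * M * proj v) =
      ⟪WithLp.toLp 2 v, toEuclideanCLM (𝕜 := ℝ) M (WithLp.toLp 2 v)⟫ := by
  rw [inner_toEuclideanCLM, proj, mul_assoc, mul_vecMulVec, vecMulVec_mul_vecMulVec,
    trace_vecMulVec, dotProduct_smul, hv, smul_eq_mul, mul_one]

lemma hsNorm_transpose (A : Matrix (Fin d) (Fin d) ℝ) : hsNorm Aᵀ = hsNorm A := by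
  rw [hsNorm, hsNorm, transpose_transpose, trace_mul_comm]

lemma hsNorm_mul_proj {v : Fin d → ℝ} (hv : v ⬝ᵥ v = 1) (M : Matrix (Fin d) (Fin d) ℝ) :
    hsNorm (M * proj v) = ‖toEuclideanCLM (𝕜 := ℝ) M (WithLp.toLp 2 v)‖ := by
  rw [hsNorm, proj, mul_vecMulVec, transpose_vecMulVec, vecMulVec_mul_vecMulVec, trace_vecMulVec,
    dotProduct_smul, hv, smul_eq_mul, mul_one, toEuclideanCLM_toLp, norm_eq_sqrt_real_inner,
    EuclideanSpace.inner_toLp_toLp, star_trivial]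

end MatrixBridge

theorem stmt13 {d : ℕ} (lam : Fin d → ℝ) (u : Fin d → Fin d → ℝ)
    (hON : ∀ k l, u k ⬝ᵥ u l = if k = l then (1 : ℝ) else 0)
    (hlam : Antitone lam)
    (E : Matrix (Fin d) (Fin d) ℝ) (hE : E.IsSymm)
    (j : Fin d) (gj : ℝ) (hgj_pos : 0 < gj)
    (hgj : IsLeast {x : ℝ | ∃ k, k ≠ j ∧ x = |lam k - lam j|} gj)
    (lamh : Fin d → ℝ) (uh : Fin d → Fin d → ℝ)
    (hONh : ∀ k l, uh k ⬝ᵥ uh l = if k = l then (1 : ℝ) else 0)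
    (hlamh : Antitone lamh)
    (hdecomp : (∑ k, lam k • proj (u k)) + E = ∑ k, lamh k • proj (uh k))
    (hdelta : delta' lam u j gj E < 1 / 4) :
    |lamh j - lam j - Matrix.trace (proj (u j) * E * proj (u j)) +
        Matrix.trace (proj (u j) * E * res lam u j * E * proj (u j))| ≤
      8 * hsNorm (proj (u j) * E * sqrtAbsRes lam u j) ^ 2 *
        (4 * delta' lam u j gj E) / (1 - 4 * delta' lam u j gj E) := by
  have hE' : E.IsHermitian := by rw [IsHermitian, conjTranspose_eq_transpose_of_trivial, hE.eq]
  obtain ⟨b, hb⟩ := exists_orthonormalBasis_toLp hON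
  obtain ⟨bh, hbh⟩ := exists_orthonormalBasis_toLp hONh
  have hj : u j ⬝ᵥ u j = 1 := by simp [hON]
  have hT : ∀ w, toEuclideanCLM (𝕜 := ℝ) (sqrtAbsRes lam u j) w =
      diagOp b (sqrtAbsResWeight lam j) w := fun w => by
    rw [sqrtAbsRes_eq_sum, toEuclideanCLM_sum_smul_proj hb]
  have hc_eq : hsNorm (sqrtAbsRes lam u j * E * proj (u j)) =
      ‖diagOp b (sqrtAbsResWeight lam j) (toEuclideanCLM (𝕜 := ℝ) E (b j))‖ := by
    rw [hsNorm_mul_proj hj, map_mul, mul_apply_eq_comp, hT, hb]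
  have hc_eq' : hsNorm (proj (u j) * E * sqrtAbsRes lam u j) =
      ‖diagOp b (sqrtAbsResWeight lam j) (toEuclideanCLM (𝕜 := ℝ) E (b j))‖ := by
    rw [← hc_eq, ← hsNorm_transpose, transpose_mul, transpose_mul, hE.eq, (proj_isSymm _).eq,
      (sqrtAbsRes_isSymm lam u j).eq, mul_assoc]
  have ha_eq : |⟪b j, toEuclideanCLM (𝕜 := ℝ) E (b j)⟫| ≤ hsNorm (proj (u j) * E * proj (u j)) := by
    rw [hsNorm_mul_proj hj, map_mul, mul_apply_eq_comp, ← hb]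
    have hPj : ⟪b j, toEuclideanCLM (𝕜 := ℝ) E (b j)⟫ = ⟪b j, toEuclideanCLM (𝕜 := ℝ) (proj (u j))
        (toEuclideanCLM (𝕜 := ℝ) E (b j))⟫ := by
      rw [inner_toEuclideanCLM, inner_toEuclideanCLM, ofLp_toEuclideanCLM, proj, vecMulVec_mulVec, hb,
        dotProduct_smul, hj]
      simp
    rw [hPj]
    simpa using abs_real_inner_le_norm (b j) (toEuclideanCLM (𝕜 := ℝ) (proj (u j))
      (toEuclideanCLM (𝕜 := ℝ) E (b j)))
  have htr : trace (proj (u j) * E * res lam u j * E * proj (u j)) =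
      ⟪toEuclideanCLM (𝕜 := ℝ) E (b j),
        diagOp b (resWeight lam j) (toEuclideanCLM (𝕜 := ℝ) E (b j))⟫ := by
    rw [mul_assoc (proj (u j)), mul_assoc (proj (u j)), trace_proj_mul_mul_proj hj, ← hb, map_mul,
      map_mul, mul_apply_eq_comp, mul_apply_eq_comp, res_eq_sum,
      toEuclideanCLM_sum_smul_proj hb]
    exact (isSymmetric_toEuclideanLin_iff.mpr hE' _ _).symm
  obtain ⟨hδ1, hδ23⟩ := max_le_iff.mp (le_refl (delta' lam u j gj E))
  obtain ⟨hδ2, hδ3⟩ := max_le_iff.mp hδ23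
  rw [htr, trace_proj_mul_mul_proj hj, ← hb, hc_eq']
  refine abs_eigenvalue_expansion_le (E := (toEuclideanCLM (𝕜 := ℝ) E).toLinearMap) b bh hlam hlamh
    (isSymmetric_toEuclideanLin_iff.mpr hE') hgj_pos
    (fun k hk => hgj.2 ⟨k, hk, rfl⟩) ((norm_nonneg _).trans hδ1) hdelta (fun w => ?_) ?_ ?_
    fun w => ?_
  · rw [← hT, ← hT]
    refine le_trans (le_of_eq ?_) (ContinuousLinearMap.le_of_opNorm_le _ hδ1 w)
    rw [map_mul, map_mul]
    rfl
  · rw [hc_eq, inv_mul_le_iff₀ (Real.sqrt_pos.mpr hgj_pos)] at hδ2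
    exact hδ2
  · rw [inv_mul_le_iff₀ hgj_pos] at hδ3
    exact ha_eq.trans hδ3
  · rw [← toEuclideanCLM_sum_smul_proj hb, ← toEuclideanCLM_sum_smul_proj hbh, ← hdecomp, map_add]
    rfl
end
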